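/- Let U, Û ∈ ℝ^{p×p} be symmetric positive semidefinite with ‖Û − U‖_max ≤ ε, and set ν = ‖U‖_op. Let τ > 0, c₀ > 0 with c₀τ²ε ≤ 1, and let v, v̂ ∈ ℝ^p be unit vectors with v̂ᵀv ≥ 0, ‖v̂‖₁ ≤ τ, and sin²Θ(v̂, v) ≤ c₀τ²ε. Then |v̂ᵀÛv̂ − vᵀUv| ≤ (2c₀ν + 1)τ²ε + 2ν√(2c₀τ²ε). -/

import Mathlib

/-!
With `c = v̂ᵀv`, `d = v̂ - v` and `w = v̂ + v`, the difference splits as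
`v̂ᵀÛv̂ - vᵀUv = v̂ᵀ(Û - U)v̂ + dᵀUw`, the second term by symmetry of `U`.
Hölder's inequality (`abs_quadForm_le`) bounds the first term by `‖v̂‖₁² ‖Û - U‖_max ≤ τ²ε`.
The second is at most `ν ‖d‖₂ ‖w‖₂` (`abs_bilin_le`), where `‖w‖₂ ≤ 2`, and, because `0 ≤ c ≤ 1`,
`‖d‖₂² = 2 - 2c ≤ 2(1 - c²) ≤ 2c₀τ²ε`. So the second term is at most `2ν√(2c₀τ²ε)`; the remaining
summand `2c₀ντ²ε` of the bound is nonnegative.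
-/

open Matrix BigOperators

noncomputable def l2norm {n : Type*} [Fintype n] (v : n → ℝ) : ℝ :=
  Real.sqrt (∑ i, v i ^ 2)

def l1norm {n : Type*} [Fintype n] (v : n → ℝ) : ℝ := ∑ i, |v i|

noncomputable def opNorm {m n : Type*} [Fintype m] [Fintype n] (A : Matrix m n ℝ) : ℝ :=
  sSup {c : ℝ | ∃ v : n → ℝ, l2norm v = 1 ∧ c = l2norm (A.mulVec v)}

noncomputable def maxNorm {m n : Type*} [Fintype m] [Fintype n] (A : Matrix m n ℝ) : ℝ :=
  ⨆ i, ⨆ j, |A i j|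

lemma l2norm_nonneg' {n : Type*} [Fintype n] (v : n → ℝ) : 0 ≤ l2norm v :=
  Real.sqrt_nonneg _

lemma l2norm_sq {n : Type*} [Fintype n] (v : n → ℝ) : l2norm v ^ 2 = v ⬝ᵥ v := by
  unfold l2norm
  rw [Real.sq_sqrt (Finset.sum_nonneg fun i _ => sq_nonneg _)]
  simp [dotProduct, sq]

lemma abs_dotProduct_le {n : Type*} [Fintype n] (v w : n → ℝ) :
    |v ⬝ᵥ w| ≤ l2norm v * l2norm w := by
  apply abs_le_of_sq_le_sq _ (mul_nonneg (l2norm_nonneg' v) (l2norm_nonneg' w))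
  rw [mul_pow]
  unfold l2norm
  rw [Real.sq_sqrt (Finset.sum_nonneg fun i _ => sq_nonneg _),
    Real.sq_sqrt (Finset.sum_nonneg fun i _ => sq_nonneg _)]
  exact Finset.sum_mul_sq_le_sq_mul_sq _ _ _

lemma l2norm_smul' {n : Type*} [Fintype n] (a : ℝ) (v : n → ℝ) :
    l2norm (a • v) = |a| * l2norm v := by
  unfold l2norm
  simp only [Pi.smul_apply, smul_eq_mul, mul_pow]
  rw [← Finset.mul_sum, Real.sqrt_mul (sq_nonneg a), Real.sqrt_sq_eq_abs]

/-- The supremum defining `opNorm` is over a bounded set: the Frobenius norm is an upper bound. -/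
lemma opNorm_bddAbove {m n : Type*} [Fintype m] [Fintype n] (A : Matrix m n ℝ) :
    BddAbove {c : ℝ | ∃ v : n → ℝ, l2norm v = 1 ∧ c = l2norm (A.mulVec v)} := by
  refine ⟨Real.sqrt (∑ i, ∑ j, A i j ^ 2), ?_⟩
  rintro c ⟨v, hv, rfl⟩
  have h1 : ∑ j, v j ^ 2 = 1 := by
    unfold l2norm at hv
    exact Real.sqrt_eq_one.mp hv
  apply Real.sqrt_le_sqrt
  refine Finset.sum_le_sum fun i _ => ?_
  have := Finset.sum_mul_sq_le_sq_mul_sq Finset.univ (fun j => A i j) v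
  rw [h1, mul_one] at this
  exact this

lemma opNorm_nonneg' {m n : Type*} [Fintype m] [Fintype n] (A : Matrix m n ℝ) :
    0 ≤ opNorm A := by
  apply Real.sSup_nonneg
  rintro c ⟨v, -, rfl⟩
  exact l2norm_nonneg' _

lemma l2norm_mulVec_le {m n : Type*} [Fintype m] [Fintype n] (A : Matrix m n ℝ) (v : n → ℝ) :
    l2norm (A.mulVec v) ≤ opNorm A * l2norm v := by
  rcases (l2norm_nonneg' v).eq_or_lt with h | h
  · have h0 : v = 0 := by
      have := l2norm_sq v
      rw [← h] at this
      exact dotProduct_self_eq_zero.mp (by simpa using this.symm)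
    simp [h0, l2norm]
  · have hi : 0 < (l2norm v)⁻¹ := inv_pos.mpr h
    have key : l2norm (A.mulVec ((l2norm v)⁻¹ • v)) ≤ opNorm A :=
      le_csSup (opNorm_bddAbove A)
        ⟨_, by rw [l2norm_smul', abs_of_pos hi, inv_mul_cancel₀ h.ne'], rfl⟩
    rw [mulVec_smul, l2norm_smul', abs_of_pos hi, inv_mul_le_iff₀ h] at key
    linarith

lemma abs_bilin_le {m n : Type*} [Fintype m] [Fintype n] (A : Matrix m n ℝ) (x : m → ℝ)
    (y : n → ℝ) : |x ⬝ᵥ A.mulVec y| ≤ opNorm A * (l2norm x * l2norm y) := by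
  have h := mul_le_mul_of_nonneg_left (l2norm_mulVec_le A y) (l2norm_nonneg' x)
  have := abs_dotProduct_le x (A.mulVec y)
  linarith

lemma abs_entry_le_maxNorm {m n : Type*} [Fintype m] [Fintype n] (A : Matrix m n ℝ) (i : m)
    (j : n) : |A i j| ≤ maxNorm A :=
  (le_ciSup (f := fun j => |A i j|) (Set.finite_range _).bddAbove j).trans
    (le_ciSup (f := fun i => ⨆ j, |A i j|) (Set.finite_range _).bddAbove i)

lemma maxNorm_nonneg' {m n : Type*} [Fintype m] [Fintype n] (A : Matrix m n ℝ) :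
    0 ≤ maxNorm A :=
  Real.iSup_nonneg fun _ => Real.iSup_nonneg fun _ => abs_nonneg _

/-- Hölder's inequality, used in both variables of the quadratic form. -/
lemma abs_quadForm_le {n : Type*} [Fintype n] (A : Matrix n n ℝ) (x : n → ℝ) :
    |x ⬝ᵥ A.mulVec x| ≤ maxNorm A * l1norm x ^ 2 := by
  have hin : ∀ i, |A.mulVec x i| ≤ maxNorm A * l1norm x := fun i => by
    simp only [mulVec, dotProduct, l1norm, Finset.mul_sum]
    refine (Finset.abs_sum_le_sum_abs _ _).trans (Finset.sum_le_sum fun j _ => ?_)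
    rw [abs_mul]
    exact mul_le_mul_of_nonneg_right (abs_entry_le_maxNorm A i j) (abs_nonneg _)
  calc |x ⬝ᵥ A.mulVec x| ≤ ∑ i, |x i * A.mulVec x i| := Finset.abs_sum_le_sum_abs _ _
    _ ≤ ∑ i, |x i| * (maxNorm A * l1norm x) := Finset.sum_le_sum fun i _ => by
        rw [abs_mul]
        exact mul_le_mul_of_nonneg_left (hin i) (abs_nonneg _)
    _ = maxNorm A * l1norm x ^ 2 := by
        rw [← Finset.sum_mul]
        change l1norm x * _ = _
        ring

/-- Lemma S3, part 2: if `‖Û − U‖_max ≤ ε`, `c₀τ²ε ≤ 1`,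
`‖v̂‖₁ ≤ τ` and `sin²Θ(v̂, v) = 1 − (v̂ᵀv)² ≤ c₀τ²ε` for unit vectors `v, v̂` with `v̂ᵀv ≥ 0`,
then `|v̂ᵀÛv̂ − vᵀUv| ≤ (2c₀ν + 1)τ²ε + 2ν√(2c₀τ²ε)` where `ν = ‖U‖_op`. -/
theorem stmt_5 {p : ℕ} (U Uh : Matrix (Fin p) (Fin p) ℝ)
    (hUpsd : U.PosSemidef) (hUhpsd : Uh.PosSemidef)
    (ε : ℝ) (hmax : maxNorm (Uh - U) ≤ ε)
    (ν : ℝ) (hν : ν = opNorm U)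
    (τ c₀ : ℝ) (hτ : 0 < τ) (hc₀ : 0 < c₀) (hsmall : c₀ * τ ^ 2 * ε ≤ 1)
    (v vh : Fin p → ℝ) (hv : l2norm v = 1) (hvh : l2norm vh = 1)
    (hpos : 0 ≤ dotProduct vh v) (hl1 : l1norm vh ≤ τ)
    (hsin : 1 - (dotProduct vh v) ^ 2 ≤ c₀ * τ ^ 2 * ε) :
    |dotProduct vh (Uh.mulVec vh) - dotProduct v (U.mulVec v)| ≤
      (2 * c₀ * ν + 1) * τ ^ 2 * ε + 2 * ν * Real.sqrt (2 * c₀ * τ ^ 2 * ε) := by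
  have hε : 0 ≤ ε := (maxNorm_nonneg' _).trans hmax
  have hν0 : 0 ≤ ν := hν ▸ opNorm_nonneg' U
  have hvv : v ⬝ᵥ v = 1 := by rw [← l2norm_sq, hv]; norm_num
  have hhh : vh ⬝ᵥ vh = 1 := by rw [← l2norm_sq, hvh]; norm_num
  have hcomm : v ⬝ᵥ vh = vh ⬝ᵥ v := dotProduct_comm _ _
  have hc1 : vh ⬝ᵥ v ≤ 1 := by
    have := (le_abs_self _).trans (abs_dotProduct_le vh v)
    rwa [hv, hvh, mul_one] at this
  have hsym : v ⬝ᵥ U.mulVec vh = vh ⬝ᵥ U.mulVec v := by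
    have hT : Uᵀ = U := by simpa using hUpsd.isHermitian.eq
    rw [dotProduct_mulVec, ← mulVec_transpose, hT, dotProduct_comm]
  have hd : l2norm (vh - v) ≤ Real.sqrt (2 * c₀ * τ ^ 2 * ε) := by
    apply Real.le_sqrt_of_sq_le
    rw [l2norm_sq]
    simp only [sub_dotProduct, dotProduct_sub, hvv, hhh, hcomm]
    nlinarith
  have hw : l2norm (vh + v) ≤ 2 := by
    refine le_of_sq_le_sq ?_ (by norm_num)
    rw [l2norm_sq]
    simp only [add_dotProduct, dotProduct_add, hvv, hhh, hcomm]
    linarith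
  have hsplit : vh ⬝ᵥ Uh.mulVec vh - v ⬝ᵥ U.mulVec v =
      vh ⬝ᵥ (Uh - U).mulVec vh + (vh - v) ⬝ᵥ U.mulVec (vh + v) := by
    simp only [sub_mulVec, mulVec_add, dotProduct_sub, sub_dotProduct, dotProduct_add, hsym]
    ring
  have hl0 : 0 ≤ l1norm vh := Finset.sum_nonneg fun i _ => abs_nonneg _
  have h1 : |vh ⬝ᵥ (Uh - U).mulVec vh| ≤ ε * τ ^ 2 :=
    (abs_quadForm_le _ _).trans (by gcongr)
  have h2 : |(vh - v) ⬝ᵥ U.mulVec (vh + v)| ≤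
      ν * (Real.sqrt (2 * c₀ * τ ^ 2 * ε) * 2) := by
    refine (abs_bilin_le _ _ _).trans ?_
    rw [← hν]
    have := l2norm_nonneg' (vh + v)
    gcongr
  have h3 : 0 ≤ 2 * c₀ * ν * τ ^ 2 * ε := by positivity
  rw [hsplit]
  refine (abs_add_le _ _).trans ?_
  linarith
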